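/- arXiv:1210.0190 — 3 statements merged into one kernel-verified Lean document; each statement's English description precedes it below -/
import Mathlib

section
/- Let V be an irreducible (𝔤 ⊗_k F)-module. If W and W' are finite-dimensional irreducible 𝔤-modules over k whose base changes W ⊗_k F and W' ⊗_k F are semisimple (𝔤 ⊗_k F)-modules and each contains a (𝔤 ⊗_k F)-submodule isomorphic to V, then W and W' are isomorphic as 𝔤-modules. In other words, there exists at most one irreducible 𝔤-module over k (up to isomorphism) whose base change to F contains V as a submodule. -/
open scoped TensorProduct

section

variable (k F : Type*) [Field k] [Field F] [Algebra k F]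

private lemma galMap_aux (σ : F ≃ₐ[k] F) (W : Type*) [AddCommGroup W] [Module k W]
    (c : F) (x : F ⊗[k] W) :
    LinearMap.rTensor W σ.toLinearMap (c • x) = σ c • LinearMap.rTensor W σ.toLinearMap x := by
  induction x using TensorProduct.induction_on with
  | zero => simp
  | tmul f w => simp [TensorProduct.smul_tmul', smul_eq_mul, map_mul]
  | add x y hx hy => rw [smul_add, map_add, map_add, smul_add, hx, hy]

/-- The `σ`-semilinear Galois action `id_W ⊗ σ` on the base change `F ⊗[k] W`. -/
noncomputable def galMap (σ : F ≃ₐ[k] F) (W : Type*) [AddCommGroup W] [Module k W] :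
    (F ⊗[k] W) →ₛₗ[(σ.toRingEquiv : F →+* F)] (F ⊗[k] W) where
  toFun := LinearMap.rTensor W σ.toLinearMap
  map_add' := map_add _
  map_smul' := galMap_aux k F σ W

/-- The image `σ(V)` of an `F`-subspace of `F ⊗[k] W` under the Galois action:
again an `F`-subspace. -/
noncomputable def galSub (σ : F ≃ₐ[k] F) {W : Type*} [AddCommGroup W] [Module k W]
    (V : Submodule F (F ⊗[k] W)) : Submodule F (F ⊗[k] W) :=
  Submodule.map (galMap k F σ W) V

variable (𝔤 : Type*) [LieRing 𝔤] [LieAlgebra k 𝔤]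

/-- `σ(V_α)` and `τ(V_β)` are isomorphic as `(𝔤 ⊗_k F)`-modules; since the Galois
images are a priori only `F`-subspaces, we phrase this via the (unique) Lie submodules
having these subspaces as underlying `F`-subspaces. -/
def GalConjIso (σ τ : F ≃ₐ[k] F)
    {W₁ W₂ : Type*} [AddCommGroup W₁] [Module k W₁] [LieRingModule 𝔤 W₁] [LieModule k 𝔤 W₁]
    [AddCommGroup W₂] [Module k W₂] [LieRingModule 𝔤 W₂] [LieModule k 𝔤 W₂]
    (Vα : LieSubmodule F (F ⊗[k] 𝔤) (F ⊗[k] W₁))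
    (Vβ : LieSubmodule F (F ⊗[k] 𝔤) (F ⊗[k] W₂)) : Prop :=
  ∃ (Vα' : LieSubmodule F (F ⊗[k] 𝔤) (F ⊗[k] W₁))
    (Vβ' : LieSubmodule F (F ⊗[k] 𝔤) (F ⊗[k] W₂)),
    (Vα' : Submodule F (F ⊗[k] W₁)) = galSub k F σ (Vα : Submodule F (F ⊗[k] W₁)) ∧
    (Vβ' : Submodule F (F ⊗[k] W₂)) = galSub k F τ (Vβ : Submodule F (F ⊗[k] W₂)) ∧
    Nonempty (Vα' ≃ₗ⁅F, F ⊗[k] 𝔤⁆ Vβ')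

/-- A Lie module is semisimple if it is a direct sum of irreducible submodules. -/
def IsSemisimpleLieModule (R L M : Type*) [CommRing R] [LieRing L] [LieAlgebra R L]
    [AddCommGroup M] [Module R M] [LieRingModule L M] : Prop :=
  ∃ (ι : Type) (p : ι → LieSubmodule R L M),
    (∀ i, IsAtom (p i)) ∧ iSupIndep p ∧ (⨆ i, p i) = ⊤

end

/-! Restricted to `𝔤`, the base change `F ⊗[k] W` is a sum of copies of the irreducible module `W`,
hence semisimple. So a `𝔤`-morphism from a submodule of `F ⊗[k] W` to `F ⊗[k] W'` extends to all of
`F ⊗[k] W`. If it is nonzero, restricting the extension to a suitable copy of `W` and contracting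
`F ⊗[k] W'` to `W'` along a suitable linear form on `F` gives a nonzero morphism `W → W'`, which is
an isomorphism by Schur's lemma. -/

section LieModule

variable {R L M P : Type*} [CommRing R] [LieRing L]
  [AddCommGroup M] [Module R M] [LieRingModule L M]
  [AddCommGroup P] [Module R P] [LieRingModule L P]

/-- A bijective morphism of Lie modules, as an isomorphism of Lie modules. -/
noncomputable def lieModuleEquivOfBijective (f : M →ₗ⁅R,L⁆ P) (hf : Function.Bijective f) :
    M ≃ₗ⁅R,L⁆ P :=
  { f, LinearEquiv.ofBijective (f : M →ₗ[R] P) hf with }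

theorem lieModuleHom_ker_eq_top_iff {f : M →ₗ⁅R,L⁆ P} : f.ker = ⊤ ↔ f = 0 := by
  simp [LieSubmodule.ext_iff, LieModuleHom.ext_iff]

theorem lieModuleHom_range_eq_bot_iff {f : M →ₗ⁅R,L⁆ P} : f.range = ⊥ ↔ f = 0 := by
  simp [LieSubmodule.eq_bot_iff, LieModuleHom.ext_iff]

theorem lieModuleHom_bijective_of_ne_zero [LieModule.IsIrreducible R L M]
    [LieModule.IsIrreducible R L P] {f : M →ₗ⁅R,L⁆ P} (hf : f ≠ 0) : Function.Bijective f :=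
  ⟨f.ker_eq_bot.1 ((eq_bot_or_eq_top f.ker).resolve_right (mt lieModuleHom_ker_eq_top_iff.1 hf)),
    f.range_eq_top.1
      ((eq_bot_or_eq_top f.range).resolve_left (mt lieModuleHom_range_eq_bot_iff.1 hf))⟩

theorem isAtom_lieModuleHom_range [LieModule.IsIrreducible R L M] {f : M →ₗ⁅R,L⁆ P}
    (hf : f ≠ 0) : IsAtom f.range := by
  refine ⟨mt lieModuleHom_range_eq_bot_iff.1 hf, fun Q hQ ↦ ?_⟩
  have hmap : (Q.comap f).map f = Q := Q.map_comap_eq f hQ.le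
  rcases eq_bot_or_eq_top (Q.comap f) with h | h
  · rw [← hmap, h, LieSubmodule.map_bot]
  · exact absurd (by rw [← hmap, h, LieModuleHom.map_top]) hQ.ne

theorem complementedLattice_of_iSup_range_eq_top [LieModule.IsIrreducible R L M] {ι : Type*}
    {f : ι → M →ₗ⁅R,L⁆ P} (hf : ⨆ i, (f i).range = ⊤) :
    ComplementedLattice (LieSubmodule R L P) := by
  refine complementedLattice_of_sSup_atoms_eq_top (top_le_iff.1 (hf ▸ iSup_le fun i ↦ ?_))
  by_cases hi : f i = 0
  · exact (lieModuleHom_range_eq_bot_iff.2 hi).trans_le bot_le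
  · exact le_sSup (isAtom_lieModuleHom_range hi)

variable [LieAlgebra R L] [LieModule R L M]

theorem bijective_mk'_comp_incl_of_isCompl {Q C : LieSubmodule R L M} (h : IsCompl Q C) :
    Function.Bijective ((LieSubmodule.Quotient.mk' C).comp Q.incl) := by
  constructor
  · rw [← LieModuleHom.ker_eq_bot, LieSubmodule.eq_bot_iff]
    intro q hq
    have hqC : (q : M) ∈ C := (LieSubmodule.Quotient.mk_eq_zero C).1 hq
    exact Subtype.ext (h.disjoint.le_bot ⟨q.2, hqC⟩)
  · intro z
    obtain ⟨m, rfl⟩ := LieSubmodule.Quotient.surjective_mk' C z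
    have hm : m ∈ Q ⊔ C := h.sup_eq_top ▸ LieSubmodule.mem_top m
    obtain ⟨q, hq, c, hc, rfl⟩ := (LieSubmodule.mem_sup Q C m).1 hm
    exact ⟨⟨q, hq⟩, by simpa using hc⟩

theorem exists_comp_incl_eq_of_complementedLattice [ComplementedLattice (LieSubmodule R L M)]
    {Q : LieSubmodule R L M} (f : Q →ₗ⁅R,L⁆ P) : ∃ g : M →ₗ⁅R,L⁆ P, g.comp Q.incl = f := by
  obtain ⟨C, hC⟩ := exists_isCompl Q
  let e := lieModuleEquivOfBijective _ (bijective_mk'_comp_incl_of_isCompl hC)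
  refine ⟨f.comp (e.symm.toLieModuleHom.comp (LieSubmodule.Quotient.mk' C)), ?_⟩
  ext q
  exact congrArg f (e.symm_apply_apply q)

end LieModule

section BaseChange

variable {k F 𝔤 W U : Type*} [CommRing k] [CommRing F] [Algebra k F]
  [LieRing 𝔤] [LieAlgebra k 𝔤]
  [AddCommGroup W] [Module k W] [LieRingModule 𝔤 W] [LieModule k 𝔤 W]
  [AddCommGroup U] [Module k U] [LieRingModule 𝔤 U] [LieModule k 𝔤 U]

/-- The action of `𝔤` on `F ⊗[k] W` through the second factor; by `one_tmul_lie` it is the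
restriction of the action of `F ⊗[k] 𝔤`. -/
local instance restrictedLieRingModule : LieRingModule 𝔤 (F ⊗[k] W) where
  bracket x y := (LieModule.toEnd k 𝔤 W x).lTensor F y
  add_lie x y z := by rw [map_add, LinearMap.lTensor_add, LinearMap.add_apply]
  lie_add x y z := map_add _ y z
  leibniz_lie x y z := by simp [Ring.lie_def, LinearMap.lTensor_sub, LinearMap.lTensor_mul]

theorem lie_eq_lTensor_toEnd (x : 𝔤) (y : F ⊗[k] W) :
    ⁅x, y⁆ = (LieModule.toEnd k 𝔤 W x).lTensor F y :=
  rfl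

theorem lie_tmul (x : 𝔤) (a : F) (w : W) : ⁅x, a ⊗ₜ[k] w⁆ = a ⊗ₜ[k] ⁅x, w⁆ :=
  rfl

theorem one_tmul_lie (x : 𝔤) (y : F ⊗[k] W) : ⁅(1 : F) ⊗ₜ[k] x, y⁆ = ⁅x, y⁆ := by
  induction y with
  | zero => rw [lie_zero, lie_zero]
  | tmul a w => rw [LieAlgebra.ExtendScalars.bracket_tmul, one_mul, lie_tmul]
  | add y z hy hz => rw [lie_add, lie_add, hy, hz]

local instance restrictedLieModule : LieModule k 𝔤 (F ⊗[k] W) where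
  smul_lie c x y := by
    simp only [lie_eq_lTensor_toEnd, map_smul, LinearMap.lTensor_smul, LinearMap.smul_apply]
  lie_smul c x y := map_smul _ c y

/-- An `F ⊗[k] 𝔤`-submodule of `F ⊗[k] W`, viewed as a `𝔤`-submodule over `k`. -/
def restrictLieSubmodule (N : LieSubmodule F (F ⊗[k] 𝔤) (F ⊗[k] W)) :
    LieSubmodule k 𝔤 (F ⊗[k] W) where
  __ := N.toSubmodule.restrictScalars k
  lie_mem {x y} hy := by
    rw [← one_tmul_lie]
    exact N.lie_mem hy

/-- An `F ⊗[k] 𝔤`-morphism from a submodule of `F ⊗[k] W` to `F ⊗[k] U`, viewed as a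
`𝔤`-morphism over `k`. -/
def restrictLieHom {N : LieSubmodule F (F ⊗[k] 𝔤) (F ⊗[k] W)}
    (f : N →ₗ⁅F,F ⊗[k] 𝔤⁆ F ⊗[k] U) : restrictLieSubmodule N →ₗ⁅k,𝔤⁆ F ⊗[k] U where
  __ := (f : N →ₗ[F] F ⊗[k] U).restrictScalars k
  map_lie' {x y} := by
    have hxy : (⁅x, y⁆ : restrictLieSubmodule N).1 = ⁅(1 : F) ⊗ₜ[k] x, y.1⁆ :=
      (one_tmul_lie x y.1).symm
    rw [← one_tmul_lie]
    exact (congrArg f (Subtype.ext hxy)).trans (f.map_lie (1 ⊗ₜ x) y)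

variable (k 𝔤 W) in
/-- The map `w ↦ a ⊗ w` of `W` into its base change, as a `𝔤`-morphism. -/
def tmulLieHom (a : F) : W →ₗ⁅k,𝔤⁆ F ⊗[k] W where
  __ := TensorProduct.mk k F W a
  map_lie' {x w} := (lie_tmul x a w).symm

variable (𝔤 W) in
/-- The contraction `a ⊗ w ↦ l a • w` of the base change of `W` along a linear form `l` on `F`, as a
`𝔤`-morphism. -/
noncomputable def contractLieHom (l : F →ₗ[k] k) : F ⊗[k] W →ₗ⁅k,𝔤⁆ W where
  __ := (TensorProduct.lid k W).toLinearMap ∘ₗ l.rTensor W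
  map_lie' {x y} := by
    induction y with
    | zero => simp
    | tmul a w => simp [lie_tmul]
    | add y z hy hz => simp_all

variable (k F 𝔤 W) in
theorem iSup_range_tmulLieHom : ⨆ a : F, (tmulLieHom k 𝔤 W a).range = ⊤ := by
  refine LieSubmodule.ext _ _ fun y ↦ iff_of_true ?_ (LieSubmodule.mem_top y)
  induction y with
  | zero => exact zero_mem _
  | tmul a w => exact LieSubmodule.mem_iSup_of_mem a ((LieModuleHom.mem_range _ _).2 ⟨w, rfl⟩)
  | add y z hy hz => exact add_mem hy hz

theorem exists_contractLieHom_apply_ne_zero [Module.Free k F] {y : F ⊗[k] W} (hy : y ≠ 0) :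
    ∃ l : F →ₗ[k] k, contractLieHom 𝔤 W l y ≠ 0 := by
  let b := Module.Free.chooseBasis k F
  obtain ⟨i, hi⟩ := Finsupp.ne_iff.1
    ((TensorProduct.equivFinsuppOfBasisLeft (N := W) b).map_ne_zero_iff.2 hy)
  exact ⟨b.coord i, by rwa [TensorProduct.equivFinsuppOfBasisLeft_apply] at hi⟩

theorem exists_lieModuleHom_ne_zero_of_baseChange [Module.Free k F]
    {g : F ⊗[k] W →ₗ⁅k,𝔤⁆ F ⊗[k] U} (hg : g ≠ 0) : ∃ h : W →ₗ⁅k,𝔤⁆ U, h ≠ 0 := by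
  have htmul : ∃ (a : F) (w : W), g (a ⊗ₜ w) ≠ 0 := by
    by_contra! h
    refine hg (lieModuleHom_ker_eq_top_iff.1 (top_le_iff.1 ?_))
    rw [← iSup_range_tmulLieHom k F 𝔤 W]
    refine iSup_le fun a ↦ ?_
    rintro _ ⟨w, rfl⟩
    exact h a w
  obtain ⟨a, w, haw⟩ := htmul
  obtain ⟨l, hl⟩ := exists_contractLieHom_apply_ne_zero (𝔤 := 𝔤) haw
  exact ⟨(contractLieHom 𝔤 U l).comp (g.comp (tmulLieHom k 𝔤 W a)),
    fun h ↦ hl (LieModuleHom.congr_fun h w)⟩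

theorem nonempty_lieModuleEquiv_of_baseChange_submodule_hom [Module.Free k F]
    [LieModule.IsIrreducible k 𝔤 W] [LieModule.IsIrreducible k 𝔤 U]
    {N : LieSubmodule F (F ⊗[k] 𝔤) (F ⊗[k] W)} {f : N →ₗ⁅F,F ⊗[k] 𝔤⁆ F ⊗[k] U} (hf : f ≠ 0) :
    Nonempty (W ≃ₗ⁅k,𝔤⁆ U) := by
  have := complementedLattice_of_iSup_range_eq_top (iSup_range_tmulLieHom k F 𝔤 W)
  obtain ⟨g, hgf⟩ := exists_comp_incl_eq_of_complementedLattice (restrictLieHom f)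
  have hg : g ≠ 0 := by
    rintro rfl
    exact hf (LieModuleHom.ext fun y ↦ (LieModuleHom.congr_fun hgf y).symm)
  obtain ⟨h, hh⟩ := exists_lieModuleHom_ne_zero_of_baseChange hg
  exact ⟨lieModuleEquivOfBijective h (lieModuleHom_bijective_of_ne_zero hh)⟩

end BaseChange

theorem stmt1_general
    (k F : Type*) [CommRing k] [CommRing F] [Algebra k F] [Module.Free k F]
    (𝔤 : Type*) [LieRing 𝔤] [LieAlgebra k 𝔤]
    (V : Type*) [AddCommGroup V] [Module F V] [LieRingModule (F ⊗[k] 𝔤) V] [Nontrivial V]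
    (W W' : Type*)
    [AddCommGroup W] [Module k W] [LieRingModule 𝔤 W] [LieModule k 𝔤 W]
    [AddCommGroup W'] [Module k W'] [LieRingModule 𝔤 W'] [LieModule k 𝔤 W']
    (hW : LieModule.IsIrreducible k 𝔤 W) (hW' : LieModule.IsIrreducible k 𝔤 W')
    (hsub : ∃ N : LieSubmodule F (F ⊗[k] 𝔤) (F ⊗[k] W), Nonempty (N ≃ₗ⁅F,F ⊗[k] 𝔤⁆ V))
    (hsub' : ∃ N : LieSubmodule F (F ⊗[k] 𝔤) (F ⊗[k] W'), Nonempty (N ≃ₗ⁅F,F ⊗[k] 𝔤⁆ V)) :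
    Nonempty (W ≃ₗ⁅k,𝔤⁆ W') := by
  obtain ⟨N, ⟨e⟩⟩ := hsub
  obtain ⟨N', ⟨e'⟩⟩ := hsub'
  have : Nontrivial N := e.toEquiv.nontrivial
  obtain ⟨n, hn⟩ := exists_ne (0 : N)
  let f : N →ₗ⁅F,F ⊗[k] 𝔤⁆ F ⊗[k] W' := N'.incl.comp (e.trans e'.symm).toLieModuleHom
  have hf : Function.Injective f := N'.injective_incl.comp (e.trans e'.symm).injective
  have hfn : f n ≠ 0 := fun h ↦ hn (hf (h.trans (map_zero f).symm))
  exact nonempty_lieModuleEquiv_of_baseChange_submodule_hom (f := f)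
    fun h ↦ hfn (LieModuleHom.congr_fun h n)

/-- There is at most one irreducible `𝔤`-module over `k` (up to
isomorphism) whose base change to `F` contains a given irreducible `(𝔤 ⊗_k F)`-module `V`
as a submodule. -/
theorem stmt1
    (k F : Type*) [Field k] [Field F] [Algebra k F] [FiniteDimensional k F] [IsGalois k F]
    (𝔤 : Type*) [LieRing 𝔤] [LieAlgebra k 𝔤] [Module.Finite k 𝔤]
    (V : Type*) [AddCommGroup V] [Module F V]
    [LieRingModule (F ⊗[k] 𝔤) V] [LieModule F (F ⊗[k] 𝔤) V]
    (hV : LieModule.IsIrreducible F (F ⊗[k] 𝔤) V)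
    (W W' : Type*)
    [AddCommGroup W] [Module k W] [LieRingModule 𝔤 W] [LieModule k 𝔤 W] [Module.Finite k W]
    [AddCommGroup W'] [Module k W'] [LieRingModule 𝔤 W'] [LieModule k 𝔤 W'] [Module.Finite k W']
    (hW : LieModule.IsIrreducible k 𝔤 W) (hW' : LieModule.IsIrreducible k 𝔤 W')
    (hss : IsSemisimpleLieModule F (F ⊗[k] 𝔤) (F ⊗[k] W))
    (hss' : IsSemisimpleLieModule F (F ⊗[k] 𝔤) (F ⊗[k] W'))
    (hsub : ∃ N : LieSubmodule F (F ⊗[k] 𝔤) (F ⊗[k] W), Nonempty (N ≃ₗ⁅F, F ⊗[k] 𝔤⁆ V))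
    (hsub' : ∃ N : LieSubmodule F (F ⊗[k] 𝔤) (F ⊗[k] W'), Nonempty (N ≃ₗ⁅F, F ⊗[k] 𝔤⁆ V)) :
    Nonempty (W ≃ₗ⁅k, 𝔤⁆ W') := by
  have : Nontrivial V := LieModule.nontrivial_of_isIrreducible F (F ⊗[k] 𝔤) V
  exact stmt1_general k F 𝔤 V W W' hW hW' hsub hsub'
end

section
/- Let W be a finite-dimensional 𝔤-module over k with a decomposition W = ⊕_{γ∈Γ} W_γ into irreducible 𝔤-submodules and a decomposition W ⊗_k F = ⊕_{α∈A} V_α into irreducible (𝔤 ⊗_k F)-submodules. Fix γ₀ ∈ Γ and α₀ ∈ A with V_{α₀} ⊆ W_{γ₀} ⊗_k F. Then, as subspaces of W ⊗_k F, one has the equality (⊕_{γ∈Γ : W_γ ≅ W_{γ₀}} W_γ) ⊗_k F = Σ_{α ∈ A'} V_α, where A' is the set of all α ∈ A for which there exist σ, τ ∈ S with τ(V_{α₀}) ≅ σ(V_α) as (𝔤 ⊗_k F)-modules; equivalently, ⊕_{γ : W_γ ≅ W_{γ₀}} W_γ equals the set of S-fixed points of Σ_{α ∈ A'} V_α. 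-/
open scoped TensorProduct

/-!
If `M` is a sum of irreducible submodules, every homomorphism from an irreducible module `N` to `M`
takes its values in the sum of the members isomorphic to `N`: otherwise it is injective and has a
retraction vanishing on that sum, which is zero by Schur's lemma.

Let `P` be irreducible over `k` and `V ≤ F ⊗ P` irreducible over `F`. Contracting the factor `F`
with a linear functional turns an endomorphism of `F ⊗ W` restricted to `P` into a homomorphism
`P → W`, so every endomorphism of `F ⊗ W` maps `F ⊗ P` into the base change of the `P`-isotypic part
of `W`. An isomorphism between conjugates of `V` and `V'` extends to an endomorphism of `F ⊗ W`,
whence `V'` lies in that base change. Conversely, by Galois descent the sum of the conjugates of `V`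
contains a nonzero vector of `P`, hence all of `F ⊗ P`. An isomorphism `P ≅ P'` extends to an
endomorphism of `W`, whose base change maps this sum onto `F ⊗ P'` and each conjugate `σ(V)` into
the `σ(V)`-isotypic part of `F ⊗ W`.
-/

section LieModule

variable {R L M N ι : Type*} [CommRing R] [LieRing L]
  [AddCommGroup M] [Module R M] [LieRingModule L M]
  [AddCommGroup N] [Module R N] [LieRingModule L N]

theorem isIrreducible_of_isAtom {P : LieSubmodule R L M} (hP : IsAtom P) :
    LieModule.IsIrreducible R L P := by
  have : Nontrivial P := (LieSubmodule.nontrivial_iff_ne_bot R L M).mpr hP.1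
  have map_incl_injective := LieSubmodule.map_injective_of_injective P.injective_incl
  refine .mk fun K hK => map_incl_injective ?_
  have hKP : K.map P.incl ≠ ⊥ := fun h =>
    hK (map_incl_injective (h.trans LieSubmodule.map_bot.symm))
  rw [(hP.le_iff.mp LieSubmodule.map_incl_le).resolve_left hKP, LieSubmodule.map_incl_top]

theorem bijective_of_ne_zero_of_isIrreducible [LieModule.IsIrreducible R L M]
    [LieModule.IsIrreducible R L N] {f : M →ₗ⁅R,L⁆ N} (hf : f ≠ 0) : Function.Bijective f := by
  constructor
  · refine f.ker_eq_bot.mp ((eq_bot_or_eq_top f.ker).resolve_right fun hker => hf ?_)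
    ext x
    exact f.mem_ker.mp (hker ▸ LieSubmodule.mem_top x)
  · refine f.range_eq_top.mp ((eq_bot_or_eq_top f.range).resolve_left fun hrange => hf ?_)
    ext x
    exact (LieSubmodule.mem_bot _).mp (hrange ▸ (f.mem_range _).mpr ⟨x, rfl⟩)

theorem nonempty_lieModuleEquiv_of_ne_zero [LieModule.IsIrreducible R L M]
    [LieModule.IsIrreducible R L N] {f : M →ₗ⁅R,L⁆ N} (hf : f ≠ 0) :
    Nonempty (M ≃ₗ⁅R,L⁆ N) :=
  ⟨{ LinearEquiv.ofBijective f.toLinearMap (bijective_of_ne_zero_of_isIrreducible hf) with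
      map_lie' := f.map_lie _ _ }⟩

theorem complementedLattice_of_iSup_atoms {p : ι → LieSubmodule R L M}
    (hp : ∀ i, IsAtom (p i)) (hsup : ⨆ i, p i = ⊤) :
    ComplementedLattice (LieSubmodule R L M) :=
  complementedLattice_of_sSup_atoms_eq_top <| top_le_iff.mp <|
    hsup ▸ iSup_le fun i => le_sSup (hp i)

theorem exists_leftInverse_of_isCompl_range {g : N →ₗ⁅R,L⁆ M} (hg : Function.Injective g)
    {U : LieSubmodule R L M} (hU : IsCompl g.range U) :
    ∃ r : M →ₗ⁅R,L⁆ N, (∀ x, r (g x) = x) ∧ r.ker = U := by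
  let e : N ≃ₗ[R] g.range := LinearEquiv.ofInjective g.toLinearMap hg
  let r : M →ₗ[R] N := e.symm ∘ₗ
    Submodule.projectionOnto _ _ (LieSubmodule.isCompl_toSubmodule.mpr hU)
  have r_comp (x : N) : r (g x) = x :=
    e.symm_apply_eq.mpr (Submodule.projectionOnto_apply_left _ (e x))
  have r_eq_zero {x : M} : r x = 0 ↔ x ∈ U :=
    e.symm.map_eq_zero_iff.trans (Submodule.projectionOnto_apply_eq_zero_iff _)
  have r_lie (l : L) (x : M) : r ⁅l, x⁆ = ⁅l, r x⁆ := by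
    have hx : x - g (r x) ∈ U := by rw [← r_eq_zero, map_sub, r_comp, sub_self]
    have hlx := r_eq_zero.mpr (U.lie_mem (x := l) hx)
    rwa [lie_sub, ← g.map_lie, map_sub, r_comp, sub_eq_zero] at hlx
  exact ⟨{ r with map_lie' := r_lie _ _ }, r_comp, LieSubmodule.ext _ _ fun _ => r_eq_zero⟩

theorem exists_leftInverse_incl [ComplementedLattice (LieSubmodule R L M)]
    (P : LieSubmodule R L M) : ∃ r : M →ₗ⁅R,L⁆ P, ∀ x : P, r x = x := by
  obtain ⟨U, hU⟩ := exists_isCompl P.incl.range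
  obtain ⟨r, hr, -⟩ := exists_leftInverse_of_isCompl_range P.injective_incl hU
  exact ⟨r, hr⟩

/-- The sum of those members of a family of Lie submodules of `M` that are isomorphic to `N`. If
`N` and the members are irreducible with sum `M`, this is the `N`-isotypic component of `M`. -/
def isotypicSum (p : ι → LieSubmodule R L M) (N : Type*) [AddCommGroup N] [Module R N]
    [LieRingModule L N] : LieSubmodule R L M :=
  ⨆ i ∈ {i | Nonempty (p i ≃ₗ⁅R,L⁆ N)}, p i

theorem eq_zero_of_isotypicSum_le_ker [LieModule.IsIrreducible R L N]
    {p : ι → LieSubmodule R L M} (hp : ∀ i, IsAtom (p i)) (hsup : ⨆ i, p i = ⊤)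
    {r : M →ₗ⁅R,L⁆ N} (hr : isotypicSum p N ≤ r.ker) : r = 0 := by
  have hpr (i : ι) : p i ≤ r.ker := by
    have := isIrreducible_of_isAtom (hp i)
    by_cases hi : r.comp (p i).incl = 0
    · exact fun x hx => LieModuleHom.congr_fun hi ⟨x, hx⟩
    · exact (le_iSup₂_of_le i (nonempty_lieModuleEquiv_of_ne_zero hi) le_rfl).trans hr
  ext x
  exact (hsup ▸ iSup_le hpr) (LieSubmodule.mem_top x)

theorem map_mem_isotypicSum [LieModule.IsIrreducible R L N]
    {p : ι → LieSubmodule R L M} (hp : ∀ i, IsAtom (p i)) (hsup : ⨆ i, p i = ⊤)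
    (f : N →ₗ⁅R,L⁆ M) (x : N) : f x ∈ isotypicSum p N := by
  rcases eq_bot_or_eq_top ((isotypicSum p N).comap f) with hcomap | hcomap
  · have eq_zero_of_mem (y : N) (hy : f y ∈ isotypicSum p N) : y = 0 :=
      (LieSubmodule.mem_bot y).mp (hcomap ▸ LieSubmodule.mem_comap.mpr hy)
    have hf : Function.Injective f := (injective_iff_map_eq_zero f).mpr fun y hy =>
      eq_zero_of_mem y (hy ▸ zero_mem _)
    have hdisj : Disjoint (isotypicSum p N) f.range := by
      refine LieSubmodule.disjoint_toSubmodule.mp (Submodule.disjoint_def.mpr ?_)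
      rintro _ hy ⟨y, rfl⟩
      exact (congrArg f (eq_zero_of_mem y hy)).trans (map_zero f)
    have := complementedLattice_of_iSup_atoms hp hsup
    obtain ⟨U, hU, hUcompl⟩ := hdisj.exists_isCompl
    obtain ⟨r, hrf, hr⟩ := exists_leftInverse_of_isCompl_range hf hUcompl.symm
    have hr0 : r = 0 := eq_zero_of_isotypicSum_le_ker hp hsup (hr ▸ hU)
    have hx : x = 0 := by rw [← hrf x, hr0, LieModuleHom.zero_apply]
    rw [hx, map_zero]
    exact zero_mem _
  · exact LieSubmodule.mem_comap.mp (hcomap ▸ LieSubmodule.mem_top x)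

end LieModule

section BaseChange

variable {R A L M N : Type*} [CommRing R] [CommRing A] [Algebra R A]
  [AddCommGroup M] [Module R M] [AddCommGroup N] [Module R N]

/-- The contraction `A ⊗ M → M` of the first tensor factor with an `R`-linear functional on `A`. -/
noncomputable def contract (φ : Module.Dual R A) : A ⊗[R] M →ₗ[R] M :=
  TensorProduct.lid R M ∘ₗ φ.rTensor M

theorem contract_tmul (φ : Module.Dual R A) (a : A) (m : M) :
    contract φ (a ⊗ₜ[R] m) = φ a • m :=
  rfl

theorem mem_baseChange_of_forall_contract_mem [Module.Free R A] {P : Submodule R M}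
    {x : A ⊗[R] M} (hx : ∀ φ : Module.Dual R A, contract φ x ∈ P) : x ∈ P.baseChange A := by
  classical
  let b := Module.Free.chooseBasis R A
  rw [← (TensorProduct.equivFinsuppOfBasisLeft b).symm_apply_apply x,
    TensorProduct.equivFinsuppOfBasisLeft_symm_apply]
  refine Submodule.sum_mem _ fun i _ => Submodule.tmul_mem_baseChange_of_mem _ ?_
  rw [TensorProduct.equivFinsuppOfBasisLeft_apply]
  exact hx (b.coord i)

theorem one_tmul_mem_baseChange_iff [Module.FaithfullyFlat R A] {P : Submodule R M} {m : M} :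
    1 ⊗ₜ[R] m ∈ P.baseChange A ↔ m ∈ P := by
  have h := Submodule.baseChange_le_iff (A := A) (p := Submodule.span R {m}) (q := P)
  rwa [Submodule.baseChange_span, Set.image_singleton, Submodule.span_singleton_le_iff_mem,
    Submodule.span_singleton_le_iff_mem] at h

variable [LieRing L] [LieAlgebra R L] [LieRingModule L M] [LieModule R L M]
  [LieRingModule L N] [LieModule R L N]

theorem contract_lie (φ : Module.Dual R A) (l : L) (x : A ⊗[R] M) :
    contract φ ⁅(1 : A) ⊗ₜ[R] l, x⁆ = ⁅l, contract φ x⁆ := by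
  induction x using TensorProduct.induction_on with
  | zero => simp only [lie_zero, map_zero]
  | tmul a m => simp only [LieAlgebra.ExtendScalars.bracket_tmul, one_mul, contract_tmul, lie_smul]
  | add x y hx hy => simp only [lie_add, map_add, hx, hy]

theorem map_lie_of_map_tmul_lie_tmul (f : A ⊗[R] M →ₗ[R] A ⊗[R] N) (g : A ⊗[R] L →ₗ[R] A ⊗[R] L)
    (hfg : ∀ a l b m, f ⁅a ⊗ₜ[R] l, b ⊗ₜ[R] m⁆ = ⁅g (a ⊗ₜ[R] l), f (b ⊗ₜ[R] m)⁆)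
    (l : A ⊗[R] L) (x : A ⊗[R] M) : f ⁅l, x⁆ = ⁅g l, f x⁆ := by
  induction l using TensorProduct.induction_on with
  | zero =>
    rw [map_zero g]
    exact (congrArg f (zero_lie x)).trans ((map_zero f).trans (zero_lie (f x)).symm)
  | tmul a l =>
    induction x using TensorProduct.induction_on with
    | zero => simp only [lie_zero, map_zero]
    | tmul b m => exact hfg a l b m
    | add x y hx hy => simp only [lie_add, map_add, hx, hy]
  | add l l' hl hl' =>
    calc f ⁅l + l', x⁆ = f (⁅l, x⁆ + ⁅l', x⁆) := congrArg f (add_lie l l' x)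
      _ = ⁅g l, f x⁆ + ⁅g l', f x⁆ := by rw [map_add, hl, hl']
      _ = ⁅g l + g l', f x⁆ := (add_lie (g l) (g l') (f x)).symm
      _ = ⁅g (l + l'), f x⁆ := by rw [map_add]

variable (A) in
/-- The base change of a homomorphism of Lie modules to a homomorphism of modules over the
extended Lie algebra. -/
noncomputable def lieBaseChange (f : M →ₗ⁅R,L⁆ N) :
    A ⊗[R] M →ₗ⁅A,A ⊗[R] L⁆ A ⊗[R] N :=
  { f.toLinearMap.baseChange A with
    map_lie' := fun {l x} => map_lie_of_map_tmul_lie_tmul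
      ((f.toLinearMap.baseChange A).restrictScalars R) .id (fun a l b m => by simp) l x }

theorem lieBaseChange_tmul (f : M →ₗ⁅R,L⁆ N) (a : A) (m : M) :
    lieBaseChange A f (a ⊗ₜ[R] m) = a ⊗ₜ[R] f m :=
  rfl

/-- The Lie submodule of `M` formed by the vectors `m` with `1 ⊗ m ∈ Q`. When `M` is identified with
its image in `A ⊗ M`, this is the intersection of `Q` with `M`. -/
def descend (Q : LieSubmodule A (A ⊗[R] L) (A ⊗[R] M)) : LieSubmodule R L M :=
  { (Q.toSubmodule.restrictScalars R).comap (TensorProduct.mk R A M 1) with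
    lie_mem := fun {l m} hm => by
      have h : ⁅(1 : A) ⊗ₜ[R] l, (1 : A) ⊗ₜ[R] m⁆ ∈ Q := Q.lie_mem hm
      rwa [LieAlgebra.ExtendScalars.bracket_tmul, one_mul] at h }

theorem mem_descend_iff {Q : LieSubmodule A (A ⊗[R] L) (A ⊗[R] M)} {m : M} :
    m ∈ descend Q ↔ 1 ⊗ₜ[R] m ∈ Q :=
  Iff.rfl

theorem baseChange_le_iff_le_descend {P : LieSubmodule R L M}
    {Q : LieSubmodule A (A ⊗[R] L) (A ⊗[R] M)} : P.baseChange A ≤ Q ↔ P ≤ descend Q := by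
  constructor
  · exact fun h m hm => mem_descend_iff.mpr (h (LieSubmodule.tmul_mem_baseChange_of_mem 1 hm))
  · intro h x hx
    rw [LieSubmodule.mem_baseChange_iff] at hx
    exact Submodule.span_le (p := Q.toSubmodule).mpr (Set.image_subset_iff.mpr h) hx

theorem map_mem_baseChange_isotypicSum [Module.Free R A] {ι : Type*} {p : ι → LieSubmodule R L M}
    (hp : ∀ i, IsAtom (p i)) (hsup : ⨆ i, p i = ⊤) {P : LieSubmodule R L N} (hP : IsAtom P)
    (f : A ⊗[R] N →ₗ⁅A,A ⊗[R] L⁆ A ⊗[R] M) {x : A ⊗[R] N} (hx : x ∈ P.baseChange A) :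
    f x ∈ (isotypicSum p P).baseChange A := by
  suffices P.baseChange A ≤ ((isotypicSum p P).baseChange A).comap f from this hx
  refine baseChange_le_iff_le_descend.mpr fun s hs => ?_
  refine mem_baseChange_of_forall_contract_mem fun φ => ?_
  let g : P →ₗ⁅R,L⁆ M :=
    { contract φ ∘ₗ f.toLinearMap.restrictScalars R ∘ₗ TensorProduct.mk R A N 1 ∘ₗ
        P.toSubmodule.subtype with
      map_lie' := fun {l y} => by
        have hly : (1 : A) ⊗ₜ[R] ⁅l, (y : N)⁆ = ⁅(1 : A) ⊗ₜ[R] l, (1 : A) ⊗ₜ[R] (y : N)⁆ := by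
          rw [LieAlgebra.ExtendScalars.bracket_tmul, one_mul]
        change contract φ (f (1 ⊗ₜ[R] ⁅l, (y : N)⁆)) = ⁅l, contract φ (f (1 ⊗ₜ[R] (y : N)))⁆
        rw [hly, f.map_lie, contract_lie] }
  have := isIrreducible_of_isAtom hP
  exact map_mem_isotypicSum hp hsup g ⟨s, hs⟩

end BaseChange

section GaloisDescent

variable {k F W : Type*} [Field k] [Field F] [Algebra k F] [AddCommGroup W] [Module k W]

theorem galMap_tmul (σ : F ≃ₐ[k] F) (a : F) (w : W) :
    galMap k F σ W (a ⊗ₜ[k] w) = σ a ⊗ₜ[k] w :=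
  rfl

theorem galMap_one (x : F ⊗[k] W) : galMap k F 1 W x = x :=
  LinearMap.rTensor_id_apply W F x

theorem galMap_galMap (σ τ : F ≃ₐ[k] F) (x : F ⊗[k] W) :
    galMap k F σ W (galMap k F τ W x) = galMap k F (σ * τ) W x :=
  (LinearMap.rTensor_comp_apply W σ.toLinearMap τ.toLinearMap x).symm

theorem galMap_mem_baseChange {P : Submodule k W} {x : F ⊗[k] W} (hx : x ∈ P.baseChange F)
    (σ : F ≃ₐ[k] F) : galMap k F σ W x ∈ P.baseChange F := by
  obtain ⟨y, rfl⟩ : x ∈ LinearMap.range (P.subtype.baseChange F) := hx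
  induction y using TensorProduct.induction_on with
  | zero => simp only [map_zero, zero_mem]
  | tmul a w => exact Submodule.tmul_mem_baseChange_of_mem (σ a) w.2
  | add y z hy hz => simpa only [map_add] using add_mem hy hz

theorem basis_repr_galMap {ι : Type*} (b : Module.Basis ι k W) (σ : F ≃ₐ[k] F) (x : F ⊗[k] W)
    (i : ι) : (Algebra.TensorProduct.basis F b).repr (galMap k F σ W x) i =
      σ ((Algebra.TensorProduct.basis F b).repr x i) := by
  induction x using TensorProduct.induction_on with
  | zero => simp only [map_zero, Finsupp.zero_apply]
  | tmul a w =>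
    rw [galMap_tmul]
    simp
  | add x y hx hy => simp only [map_add, Finsupp.add_apply, hx, hy]

theorem exists_one_tmul_eq_of_galMap_fixed [Algebra.IsInvariant k F (F ≃ₐ[k] F)] {x : F ⊗[k] W}
    (hx : ∀ σ, galMap k F σ W x = x) : ∃ w : W, 1 ⊗ₜ[k] w = x := by
  let b := Module.Basis.ofVectorSpace k W
  let B := Algebra.TensorProduct.basis F b
  have hcoord (i) : ∃ c : k, algebraMap k F c = B.repr x i :=
    Algebra.IsInvariant.isInvariant (G := F ≃ₐ[k] F) _ fun σ => by
      rw [AlgEquiv.smul_def, ← basis_repr_galMap, hx]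
  choose c hc using hcoord
  refine ⟨∑ i ∈ (B.repr x).support, c i • b i, ?_⟩
  calc (1 : F) ⊗ₜ[k] ∑ i ∈ (B.repr x).support, c i • b i
      = ∑ i ∈ (B.repr x).support, B.repr x i • B i := by
        rw [TensorProduct.tmul_sum]
        refine Finset.sum_congr rfl fun i _ => ?_
        rw [TensorProduct.tmul_smul, ← hc, algebraMap_smul, Algebra.TensorProduct.basis_apply]
    _ = x := B.linearCombination_repr x

-- A nonzero vector of `T` of minimal support, scaled to have a coordinate equal to `1`, is fixed
-- by every `σ`: its difference with its image under `σ` lies in `T` and has smaller support.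
theorem exists_one_tmul_mem_of_galMap_stable [Algebra.IsInvariant k F (F ≃ₐ[k] F)]
    {T : Submodule F (F ⊗[k] W)} (hT : ∀ σ, ∀ x ∈ T, galMap k F σ W x ∈ T) (hne : T ≠ ⊥) :
    ∃ w : W, w ≠ 0 ∧ 1 ⊗ₜ[k] w ∈ T := by
  let B := Algebra.TensorProduct.basis F (Module.Basis.ofVectorSpace k W)
  obtain ⟨x, ⟨hxT, hx0⟩, hmin⟩ := (InvImage.wf (fun x => (B.repr x).support)
    wellFounded_lt).has_min {x | x ∈ T ∧ x ≠ 0} (T.ne_bot_iff.mp hne)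
  obtain ⟨i, hi⟩ := Finsupp.ne_iff.mp (B.repr.map_ne_zero_iff.mpr hx0)
  rw [Finsupp.zero_apply] at hi
  let y := (B.repr x i)⁻¹ • x
  have hyT : y ∈ T := T.smul_mem _ hxT
  have hy (j) : B.repr y j = (B.repr x i)⁻¹ * B.repr x j := by
    rw [map_smul, Finsupp.smul_apply, smul_eq_mul]
  have hfix (σ : F ≃ₐ[k] F) : galMap k F σ W y = y := by
    let z := galMap k F σ W y - y
    have hz (j) : B.repr z j = σ (B.repr y j) - B.repr y j := by
      rw [map_sub, Finsupp.sub_apply, basis_repr_galMap]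
    have hzx : (B.repr z).support < (B.repr x).support := by
      refine Finset.ssubset_iff_of_subset (fun j => ?_) |>.mpr ⟨i, ?_, ?_⟩
      · simp only [Finsupp.mem_support_iff, hz, hy]
        exact mt fun hj => by rw [hj, mul_zero, map_zero, sub_zero]
      · exact Finsupp.mem_support_iff.mpr hi
      · rw [Finsupp.notMem_support_iff, hz, hy, inv_mul_cancel₀ hi, map_one, sub_self]
    by_contra hne
    exact hmin z ⟨sub_mem (hT σ y hyT) hyT, sub_ne_zero.mpr hne⟩ hzx
  obtain ⟨w, hw⟩ := exists_one_tmul_eq_of_galMap_fixed hfix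
  refine ⟨w, fun hw0 => smul_ne_zero (inv_ne_zero hi) hx0 ?_, hw ▸ hyT⟩
  rw [hw0, TensorProduct.tmul_zero] at hw
  exact hw.symm

theorem mem_baseChange_and_galMap_fixed_iff [Algebra.IsInvariant k F (F ≃ₐ[k] F)]
    {P : Submodule k W} {x : F ⊗[k] W} :
    (x ∈ P.baseChange F ∧ ∀ σ, galMap k F σ W x = x) ↔ x ∈ P.map (TensorProduct.mk k F W 1) := by
  constructor
  · rintro ⟨hxP, hfix⟩
    obtain ⟨w, rfl⟩ := exists_one_tmul_eq_of_galMap_fixed hfix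
    exact ⟨w, one_tmul_mem_baseChange_iff.mp hxP, rfl⟩
  · rintro ⟨w, hw, rfl⟩
    refine ⟨Submodule.tmul_mem_baseChange_of_mem 1 hw, fun σ => ?_⟩
    rw [TensorProduct.mk_apply, galMap_tmul, map_one]

end GaloisDescent

section GaloisConjugates

variable {k F 𝔤 W : Type*} [Field k] [Field F] [Algebra k F] [LieRing 𝔤] [LieAlgebra k 𝔤]
  [AddCommGroup W] [Module k W] [LieRingModule 𝔤 W] [LieModule k 𝔤 W]

theorem galMap_lie (σ : F ≃ₐ[k] F) (l : F ⊗[k] 𝔤) (x : F ⊗[k] W) :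
    galMap k F σ W ⁅l, x⁆ = ⁅galMap k F σ 𝔤 l, galMap k F σ W x⁆ :=
  map_lie_of_map_tmul_lie_tmul (σ.toLinearMap.rTensor W) (σ.toLinearMap.rTensor 𝔤)
    (fun a l b w => by simp) l x

/-- The Galois conjugate `σ(V)` of a Lie submodule `V` of `F ⊗ W`, as a Lie submodule. Its
underlying `F`-subspace is `galSub k F σ V` by definition. -/
noncomputable def galConj (σ : F ≃ₐ[k] F) (V : LieSubmodule F (F ⊗[k] 𝔤) (F ⊗[k] W)) :
    LieSubmodule F (F ⊗[k] 𝔤) (F ⊗[k] W) :=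
  { galSub k F σ V.toSubmodule with
    lie_mem := by
      rintro l _ ⟨x, hx, rfl⟩
      refine ⟨⁅galMap k F σ⁻¹ 𝔤 l, x⁆, V.lie_mem hx, ?_⟩
      rw [galMap_lie, galMap_galMap, mul_inv_cancel, galMap_one] }

theorem mem_galConj_iff {σ : F ≃ₐ[k] F} {V : LieSubmodule F (F ⊗[k] 𝔤) (F ⊗[k] W)}
    {x : F ⊗[k] W} : x ∈ galConj σ V ↔ galMap k F σ⁻¹ W x ∈ V := by
  constructor
  · rintro ⟨y, hy, rfl⟩
    rwa [galMap_galMap, inv_mul_cancel, galMap_one]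
  · exact fun hx => ⟨_, hx, by rw [galMap_galMap, mul_inv_cancel, galMap_one]⟩

theorem galConj_one (V : LieSubmodule F (F ⊗[k] 𝔤) (F ⊗[k] W)) : galConj 1 V = V := by
  ext x
  rw [mem_galConj_iff, inv_one, galMap_one]

theorem galConj_galConj (σ τ : F ≃ₐ[k] F) (V : LieSubmodule F (F ⊗[k] 𝔤) (F ⊗[k] W)) :
    galConj σ (galConj τ V) = galConj (σ * τ) V := by
  ext x
  rw [mem_galConj_iff, mem_galConj_iff, mem_galConj_iff, galMap_galMap, mul_inv_rev]

theorem galConj_mono (σ : F ≃ₐ[k] F) :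
    Monotone (galConj σ (𝔤 := 𝔤) (W := W)) := fun _ _ h _ hx =>
  mem_galConj_iff.mpr (h (mem_galConj_iff.mp hx))

/-- Galois conjugation by `σ` as an automorphism of the lattice of Lie submodules of `F ⊗ W`. -/
noncomputable def galConjOrderIso (σ : F ≃ₐ[k] F) :
    LieSubmodule F (F ⊗[k] 𝔤) (F ⊗[k] W) ≃o LieSubmodule F (F ⊗[k] 𝔤) (F ⊗[k] W) :=
  Equiv.toOrderIso
    { toFun := galConj σ
      invFun := galConj σ⁻¹
      left_inv := fun V => by rw [galConj_galConj, inv_mul_cancel, galConj_one]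
      right_inv := fun V => by rw [galConj_galConj, mul_inv_cancel, galConj_one] }
    (galConj_mono σ) (galConj_mono σ⁻¹)

theorem isAtom_galConj {V : LieSubmodule F (F ⊗[k] 𝔤) (F ⊗[k] W)} (hV : IsAtom V)
    (σ : F ≃ₐ[k] F) : IsAtom (galConj σ V) :=
  ((galConjOrderIso σ).isAtom_iff V).mpr hV

theorem galConj_le_baseChange_iff {V : LieSubmodule F (F ⊗[k] 𝔤) (F ⊗[k] W)}
    {P : LieSubmodule k 𝔤 W} {σ : F ≃ₐ[k] F} :
    galConj σ V ≤ P.baseChange F ↔ V ≤ P.baseChange F := by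
  constructor
  · intro h x hx
    have hσx : galMap k F σ W x ∈ P.baseChange F := h ⟨x, hx, rfl⟩
    have := galMap_mem_baseChange hσx σ⁻¹
    rwa [galMap_galMap, inv_mul_cancel, galMap_one] at this
  · rintro h _ ⟨x, hx, rfl⟩
    exact galMap_mem_baseChange (h hx) σ

theorem galMap_mem_iSup_galConj {V : LieSubmodule F (F ⊗[k] 𝔤) (F ⊗[k] W)} (σ : F ≃ₐ[k] F)
    {x : F ⊗[k] W} (hx : x ∈ ⨆ τ, galConj τ V) : galMap k F σ W x ∈ ⨆ τ, galConj τ V := by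
  suffices ⨆ τ, galConj τ V ≤ galConj σ⁻¹ (⨆ τ, galConj τ V) by
    have h := mem_galConj_iff.mp (this hx)
    rwa [inv_inv] at h
  refine iSup_le fun τ => ?_
  rw [show galConj τ V = galConj σ⁻¹ (galConj (σ * τ) V) by
    rw [galConj_galConj, inv_mul_cancel_left]]
  exact galConj_mono σ⁻¹ (le_iSup (galConj · V) (σ * τ))

theorem baseChange_le_iSup_galConj [Algebra.IsInvariant k F (F ≃ₐ[k] F)]
    {P : LieSubmodule k 𝔤 W} (hP : IsAtom P) {V : LieSubmodule F (F ⊗[k] 𝔤) (F ⊗[k] W)}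
    (hV : V ≠ ⊥) (hVP : V ≤ P.baseChange F) : P.baseChange F ≤ ⨆ σ, galConj σ V := by
  let T := ⨆ σ, galConj σ V
  have hVT : V ≤ T := (galConj_one V).ge.trans (le_iSup (galConj · V) 1)
  have hTP : T ≤ P.baseChange F := iSup_le fun σ => galConj_le_baseChange_iff.mpr hVP
  obtain ⟨w, hw0, hwT⟩ := exists_one_tmul_mem_of_galMap_stable (T := T.toSubmodule)
    (fun σ x hx => galMap_mem_iSup_galConj σ hx)
    (mt T.toSubmodule_eq_bot.mp (ne_bot_of_le_ne_bot hV hVT))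
  have hwP : w ∈ P := one_tmul_mem_baseChange_iff.mp (hTP hwT)
  have hPT : ¬ Disjoint P (descend T) := fun h => hw0 <|
    (LieSubmodule.mem_bot w).mp (h.le_bot (show w ∈ P ⊓ descend T from ⟨hwP, hwT⟩))
  exact baseChange_le_iff_le_descend.mpr (hP.not_disjoint_iff_le.mp hPT)

end GaloisConjugates

section IsotypicBaseChange

variable {k F 𝔤 W Γ A : Type*} [Field k] [Field F] [Algebra k F] [LieRing 𝔤] [LieAlgebra k 𝔤]
  [AddCommGroup W] [Module k W] [LieRingModule 𝔤 W] [LieModule k 𝔤 W]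

theorem le_baseChange_isotypicSum_of_galConjIso
    [ComplementedLattice (LieSubmodule F (F ⊗[k] 𝔤) (F ⊗[k] W))]
    {p : Γ → LieSubmodule k 𝔤 W} (hp : ∀ γ, IsAtom (p γ)) (hpsup : ⨆ γ, p γ = ⊤)
    {P : LieSubmodule k 𝔤 W} (hP : IsAtom P) {V V' : LieSubmodule F (F ⊗[k] 𝔤) (F ⊗[k] W)}
    (hV : V ≤ P.baseChange F) {σ τ : F ≃ₐ[k] F} (h : GalConjIso k F 𝔤 τ σ V V') :
    V' ≤ (isotypicSum p P).baseChange F := by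
  obtain ⟨U, U', hU, hU', ⟨e⟩⟩ := h
  obtain rfl : U = galConj τ V := LieSubmodule.toSubmodule_injective hU
  obtain rfl : U' = galConj σ V' := LieSubmodule.toSubmodule_injective hU'
  obtain ⟨r, hr⟩ := exists_leftInverse_incl (galConj τ V)
  let f := (galConj σ V').incl.comp (e.toLieModuleHom.comp r)
  refine (galConj_le_baseChange_iff (σ := σ)).mp fun y hy => ?_
  have hf : f (e.symm ⟨y, hy⟩) = y := by
    change (e (r (e.symm ⟨y, hy⟩)) : F ⊗[k] W) = y
    rw [hr, e.apply_symm_apply]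
  rw [← hf]
  exact map_mem_baseChange_isotypicSum hp hpsup hP f
    (galConj_le_baseChange_iff.mpr hV (e.symm ⟨y, hy⟩).2)

theorem baseChange_le_iSup_isotypicSum_of_equiv [Algebra.IsInvariant k F (F ≃ₐ[k] F)]
    [ComplementedLattice (LieSubmodule k 𝔤 W)]
    {q : A → LieSubmodule F (F ⊗[k] 𝔤) (F ⊗[k] W)} (hq : ∀ α, IsAtom (q α))
    (hqsup : ⨆ α, q α = ⊤) {P P' : LieSubmodule k 𝔤 W} (hP : IsAtom P) (e : P' ≃ₗ⁅k,𝔤⁆ P)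
    {V : LieSubmodule F (F ⊗[k] 𝔤) (F ⊗[k] W)} (hV : IsAtom V) (hVP : V ≤ P.baseChange F) :
    P'.baseChange F ≤ ⨆ σ, isotypicSum q (galConj σ V) := by
  obtain ⟨r, hr⟩ := exists_leftInverse_incl P
  let f := P'.incl.comp (e.symm.toLieModuleHom.comp r)
  have hf (w : P') : f (e w) = w := by
    change (e.symm (r (e w)) : W) = w
    rw [hr, e.symm_apply_apply]
  have hmap (σ : F ≃ₐ[k] F) :
      galConj σ V ≤ (⨆ σ, isotypicSum q (galConj σ V)).comap (lieBaseChange F f) := fun x hx => by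
    have := isIrreducible_of_isAtom (isAtom_galConj hV σ)
    exact le_iSup (fun σ => isotypicSum q (galConj σ V)) σ
      (map_mem_isotypicSum hq hqsup ((lieBaseChange F f).comp (galConj σ V).incl) ⟨x, hx⟩)
  refine baseChange_le_iff_le_descend.mpr fun w hw => ?_
  have h := iSup_le hmap (baseChange_le_iSup_galConj hP hV.1 hVP
    (LieSubmodule.tmul_mem_baseChange_of_mem 1 (e ⟨w, hw⟩).2))
  rwa [LieSubmodule.mem_comap, lieBaseChange_tmul, hf] at h

theorem isotypicSum_galConj_le (q : A → LieSubmodule F (F ⊗[k] 𝔤) (F ⊗[k] W))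
    (V : LieSubmodule F (F ⊗[k] 𝔤) (F ⊗[k] W)) (σ : F ≃ₐ[k] F) :
    isotypicSum q (galConj σ V) ≤
      ⨆ α ∈ {α | ∃ σ τ : F ≃ₐ[k] F, GalConjIso k F 𝔤 τ σ V (q α)}, q α :=
  biSup_mono fun α ⟨e⟩ =>
    ⟨1, σ, galConj σ V, q α, rfl, congrArg _ (galConj_one (q α)).symm, ⟨e.symm⟩⟩

theorem baseChange_isotypicSum_eq [Algebra.IsInvariant k F (F ≃ₐ[k] F)]
    {p : Γ → LieSubmodule k 𝔤 W} (hp : ∀ γ, IsAtom (p γ)) (hpsup : ⨆ γ, p γ = ⊤)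
    {q : A → LieSubmodule F (F ⊗[k] 𝔤) (F ⊗[k] W)} (hq : ∀ α, IsAtom (q α))
    (hqsup : ⨆ α, q α = ⊤) {P : LieSubmodule k 𝔤 W} (hP : IsAtom P)
    {V : LieSubmodule F (F ⊗[k] 𝔤) (F ⊗[k] W)} (hV : IsAtom V) (hVP : V ≤ P.baseChange F) :
    (isotypicSum p P).baseChange F =
      ⨆ α ∈ {α | ∃ σ τ : F ≃ₐ[k] F, GalConjIso k F 𝔤 τ σ V (q α)}, q α := by
  have := complementedLattice_of_iSup_atoms hp hpsup
  have := complementedLattice_of_iSup_atoms hq hqsup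
  apply le_antisymm
  · refine baseChange_le_iff_le_descend.mpr (iSup₂_le fun γ ⟨e⟩ => ?_)
    rw [← baseChange_le_iff_le_descend]
    exact (baseChange_le_iSup_isotypicSum_of_equiv hq hqsup hP e hV hVP).trans
      (iSup_le (isotypicSum_galConj_le q V))
  · exact iSup₂_le fun α ⟨σ, τ, h⟩ =>
      le_baseChange_isotypicSum_of_galConjIso hp hpsup hP hVP h

theorem stmt3_general [Algebra.IsInvariant k F (F ≃ₐ[k] F)]
    {p : Γ → LieSubmodule k 𝔤 W} (hp : ∀ γ, IsAtom (p γ)) (hpsup : ⨆ γ, p γ = ⊤)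
    {q : A → LieSubmodule F (F ⊗[k] 𝔤) (F ⊗[k] W)} (hq : ∀ α, IsAtom (q α))
    (hqsup : ⨆ α, q α = ⊤) {P : LieSubmodule k 𝔤 W} (hP : IsAtom P)
    {V : LieSubmodule F (F ⊗[k] 𝔤) (F ⊗[k] W)} (hV : IsAtom V) (hVP : V ≤ P.baseChange F) :
    ((⨆ γ ∈ {γ | Nonempty (p γ ≃ₗ⁅k,𝔤⁆ P)}, p γ).baseChange F =
      ⨆ α ∈ {α | ∃ σ τ : F ≃ₐ[k] F, GalConjIso k F 𝔤 τ σ V (q α)}, q α) ∧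
    ∀ x : F ⊗[k] W,
      (x ∈ (⨆ α ∈ {α | ∃ σ τ : F ≃ₐ[k] F, GalConjIso k F 𝔤 τ σ V (q α)}, q α) ∧
        ∀ σ : F ≃ₐ[k] F, galMap k F σ W x = x) ↔
      x ∈ (⨆ γ ∈ {γ | Nonempty (p γ ≃ₗ⁅k,𝔤⁆ P)}, p γ).toSubmodule.map
        (TensorProduct.mk k F W 1) := by
  have h := baseChange_isotypicSum_eq hp hpsup hq hqsup hP hV hVP
  refine ⟨h, fun x => ?_⟩
  rw [← h]
  exact mem_baseChange_and_galMap_fixed_iff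

end IsotypicBaseChange

/-- Given a decomposition `W = ⊕_γ W_γ` into irreducible `𝔤`-submodules
and a decomposition `W ⊗_k F = ⊕_α V_α` into irreducible `(𝔤 ⊗_k F)`-submodules, with
`V_{α₀} ⊆ W_{γ₀} ⊗_k F`, the base change of the sum of all `W_γ ≅ W_{γ₀}` equals the sum
of all `V_α` Galois-conjugate-isomorphic to `V_{α₀}`; equivalently, the former sum is the
set of Galois-fixed points of the latter. -/
theorem stmt3
    (k F : Type*) [Field k] [Field F] [Algebra k F] [FiniteDimensional k F] [IsGalois k F]
    (𝔤 : Type*) [LieRing 𝔤] [LieAlgebra k 𝔤] [Module.Finite k 𝔤]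
    (W : Type*)
    [AddCommGroup W] [Module k W] [LieRingModule 𝔤 W] [LieModule k 𝔤 W] [Module.Finite k W]
    (Γ A : Type)
    (Wfam : Γ → LieSubmodule k 𝔤 W)
    (hWatom : ∀ γ, IsAtom (Wfam γ)) (hWindep : iSupIndep Wfam) (hWsup : (⨆ γ, Wfam γ) = ⊤)
    (Vfam : A → LieSubmodule F (F ⊗[k] 𝔤) (F ⊗[k] W))
    (hVatom : ∀ α, IsAtom (Vfam α)) (hVindep : iSupIndep Vfam) (hVsup : (⨆ α, Vfam α) = ⊤)
    (γ₀ : Γ) (α₀ : A) (hα₀ : Vfam α₀ ≤ (Wfam γ₀).baseChange F) :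
    ((⨆ γ ∈ {γ' : Γ | Nonempty (↥(Wfam γ') ≃ₗ⁅k, 𝔤⁆ ↥(Wfam γ₀))}, Wfam γ).baseChange F
        = ⨆ α ∈ {α' : A | ∃ σ τ : F ≃ₐ[k] F, GalConjIso k F 𝔤 τ σ (Vfam α₀) (Vfam α')},
            Vfam α) ∧
    (∀ x : F ⊗[k] W,
      (x ∈ (⨆ α ∈ {α' : A | ∃ σ τ : F ≃ₐ[k] F,
              GalConjIso k F 𝔤 τ σ (Vfam α₀) (Vfam α')}, Vfam α) ∧
        ∀ σ : F ≃ₐ[k] F, galMap k F σ W x = x) ↔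
      x ∈ Submodule.map (TensorProduct.mk k F W 1)
        ((⨆ γ ∈ {γ' : Γ | Nonempty (↥(Wfam γ') ≃ₗ⁅k, 𝔤⁆ ↥(Wfam γ₀))}, Wfam γ :
          LieSubmodule k 𝔤 W) : Submodule k W)) :=
  stmt3_general hWatom hWsup hVatom hVsup (hWatom γ₀) (hVatom α₀) hα₀
end

section
/- Suppose h₁, h₂, h₃ ∈ Gal(F/ℚ) satisfy: for each i, hᵢ(zᵢ) = −zᵢ while hᵢ(z_j) = z_j for j ≠ i. Then the fixed field of the subgroup of Gal(F/ℚ) generated by h₁h₂ and h₂h₃ is ℚ(i, ρ) = ℚ(√−1, ρ), an extension of ℚ of degree 6. -/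
/-!
Put `p = z₁ z₂ z₃`. The numbers `ρ`, `1 / (1 - ρ)`, `1 - 1 / ρ` multiply to `-1`, so `p ^ 2 = -1`
and `ℚ(i, ρ)` is generated by the `zᵢ ^ 2` and `p`. Since `F` is obtained from this field by
adjoining square roots, it is Galois over it. An automorphism of `F` over this field sends each
`zᵢ` to `±zᵢ` and fixes `p`, so it changes an even number of signs: it is one of `1`, `h₁ h₂`,
`h₂ h₃` and `(h₁ h₂)(h₂ h₃)`, and the Galois correspondence applies. The degree is `2 * 3`, the
degrees of `i` and `ρ` being coprime.
-/

theorem neZero_two_of_algebra (K E : Type*) [Field K] [Ring E] [Nontrivial E] [Algebra K E]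
    [NeZero (2 : K)] : NeZero (2 : E) :=
  ⟨by rw [← map_ofNat (algebraMap K E) 2]; exact (map_ne_zero _).2 two_ne_zero⟩

section GaloisTheory

open IntermediateField Polynomial

variable {K E : Type*} [Field K] [Field E] [Algebra K E]

theorem mem_fixedField_closure_iff {S : Set Gal(E/K)} {x : E} :
    x ∈ fixedField (Subgroup.closure S) ↔ ∀ g ∈ S, g x = x := by
  have h : Subgroup.closure S ≤ MulAction.stabilizer Gal(E/K) x ↔ ∀ g ∈ S, g x = x :=
    Subgroup.closure_le _
  exact (mem_fixedField_iff _ x).trans h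

theorem fixedField_fixingSubgroup_of_isGalois_top (L : IntermediateField K E) [IsGalois L E] :
    fixedField L.fixingSubgroup = L := by
  refine le_antisymm (fun x hx ↦ ?_) ((le_iff_le _ L).2 le_rfl)
  have hx_bot : x ∈ (⊥ : IntermediateField L E) :=
    (InfiniteGalois.mem_bot_iff_fixed x).2 fun σ ↦ hx ((fixingSubgroupEquiv L).symm σ)
  obtain ⟨y, rfl⟩ := mem_bot.1 hx_bot
  exact y.2

theorem isGalois_of_adjoin_eq_top {S : Set E} (hS : adjoin K S = ⊤)
    (hsep : ∀ x ∈ S, IsSeparable K x)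
    (hsplits : ∀ x ∈ S, ((minpoly K x).map (algebraMap K E)).Splits) : IsGalois K E := by
  have : Algebra.IsSeparable K (⊤ : IntermediateField K E) :=
    hS ▸ (isSeparable_adjoin_iff_isSeparable K E).2 hsep
  have hsepE : Algebra.IsSeparable K E := (isSeparable_top K E).1 this
  have hnormal : Normal K E := normal_iff.2 fun x ↦ ⟨Algebra.IsSeparable.isIntegral K x,
    splits_of_mem_adjoin K E (fun y hy ↦ ⟨(hsep y hy).isIntegral, hsplits y hy⟩) (hS ▸ mem_top)⟩
  exact isGalois_iff.2 ⟨hsepE, hnormal⟩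

theorem splits_minpoly_of_sq_eq_algebraMap {x : E} {a : K} (hx : x ^ 2 = algebraMap K E a) :
    ((minpoly K x).map (algebraMap K E)).Splits := by
  have hfactor : (X ^ 2 - C a).map (algebraMap K E) = (X - C x) * (X + C x) := by
    simp only [Polynomial.map_sub, Polynomial.map_pow, map_X, map_C, ← hx, C_pow]
    ring
  have hsplits : ((X ^ 2 - C a).map (algebraMap K E)).Splits :=
    hfactor ▸ (Splits.X_sub_C x).mul (Splits.X_add_C x)
  have hdvd : minpoly K x ∣ X ^ 2 - C a := minpoly.dvd K x (by simp [hx])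
  have hne_zero := ((monic_X_pow_sub_C a two_ne_zero).map (algebraMap K E)).ne_zero
  exact hsplits.of_dvd hne_zero (map_dvd (mapRingHom (algebraMap K E)) hdvd)

theorem isSeparable_of_sq_eq_algebraMap [NeZero (2 : K)] {x : E} {a : K}
    (hx : x ^ 2 = algebraMap K E a) : IsSeparable K x := by
  rcases eq_or_ne a 0 with rfl | ha
  · obtain rfl : x = algebraMap K E 0 := by simpa using hx
    exact isSeparable_algebraMap 0
  · have hsep : (X ^ 2 - C a).Separable := separable_X_pow_sub_C a (mod_cast two_ne_zero) ha
    exact hsep.of_dvd (minpoly.dvd K x (by simp [hx]))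

theorem isGalois_of_adjoin_sqrt_eq_top [NeZero (2 : K)] {S : Set E} (hS : adjoin K S = ⊤)
    (hsq : ∀ x ∈ S, ∃ a : K, x ^ 2 = algebraMap K E a) : IsGalois K E :=
  isGalois_of_adjoin_eq_top hS
    (fun x hx ↦ (hsq x hx).elim fun _ ↦ isSeparable_of_sq_eq_algebraMap)
    (fun x hx ↦ (hsq x hx).elim fun _ ↦ splits_minpoly_of_sq_eq_algebraMap)

theorem algHom_ext_of_adjoin_eq_top {A : Type*} [Field A] [Algebra K A] {S : Set E}
    (hS : adjoin K S = ⊤) {φ ψ : E →ₐ[K] A} (h : S.EqOn φ ψ) : φ = ψ := by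
  have heq : φ.comp (⊤ : IntermediateField K E).val = ψ.comp (⊤ : IntermediateField K E).val :=
    algHom_ext_of_eq_adjoin K hS.symm fun x hx ↦ h hx
  exact AlgHom.ext fun x ↦ DFunLike.congr_fun heq ⟨x, mem_top⟩

theorem finrank_adjoin_simple_of_irreducible {p : K[X]} (hp : Irreducible p) {x : E}
    (hx : aeval x p = 0) : Module.finrank K K⟮x⟯ = p.natDegree := by
  have hint : IsIntegral K x := IsAlgebraic.isIntegral ⟨p, hp.ne_zero, hx⟩
  rw [adjoin.finrank hint, ← minpoly.eq_of_irreducible hp hx,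
    natDegree_mul_leadingCoeff_inv _ hp.ne_zero]

theorem finrank_adjoin_pair_of_coprime {x y : E}
    (h : (Module.finrank K K⟮x⟯).Coprime (Module.finrank K K⟮y⟯)) :
    Module.finrank K K⟮x, y⟯ = Module.finrank K K⟮x⟯ * Module.finrank K K⟮y⟯ := by
  rw [← (LinearDisjoint.of_finrank_coprime h).finrank_sup, ← adjoin_union, Set.singleton_union]

end GaloisTheory

section SignChanges

open IntermediateField

variable {K E : Type*} [Field K] [Field E] [Algebra K E] {z₁ z₂ z₃ : E} {h₁ h₂ h₃ : Gal(E/K)}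

theorem mem_closure_of_fixes_sq_of_fixes_prod [NeZero (2 : K)]
    (htop : adjoin K {z₁, z₂, z₃} = ⊤) (hne : z₁ * z₂ * z₃ ≠ 0)
    (hh₁ : h₁ z₁ = -z₁ ∧ h₁ z₂ = z₂ ∧ h₁ z₃ = z₃)
    (hh₂ : h₂ z₁ = z₁ ∧ h₂ z₂ = -z₂ ∧ h₂ z₃ = z₃)
    (hh₃ : h₃ z₁ = z₁ ∧ h₃ z₂ = z₂ ∧ h₃ z₃ = -z₃) {σ : Gal(E/K)}
    (hσ₁ : σ (z₁ ^ 2) = z₁ ^ 2) (hσ₂ : σ (z₂ ^ 2) = z₂ ^ 2) (hσ₃ : σ (z₃ ^ 2) = z₃ ^ 2)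
    (hσ : σ (z₁ * z₂ * z₃) = z₁ * z₂ * z₃) :
    σ ∈ Subgroup.closure {h₁ * h₂, h₂ * h₃} := by
  set H := Subgroup.closure {h₁ * h₂, h₂ * h₃}
  have h₁₂ : h₁ * h₂ ∈ H := Subgroup.subset_closure (by simp)
  have h₂₃ : h₂ * h₃ ∈ H := Subgroup.subset_closure (by simp)
  have mem_of_agree (τ : Gal(E/K)) (hτ : τ ∈ H) (e₁ : σ z₁ = τ z₁) (e₂ : σ z₂ = τ z₂)
      (e₃ : σ z₃ = τ z₃) : σ ∈ H := by
    have hagree : Set.EqOn σ τ {z₁, z₂, z₃} := by rintro _ (rfl | rfl | rfl) <;> assumption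
    have hστ : (σ : E →ₐ[K] E) = τ := algHom_ext_of_adjoin_eq_top htop hagree
    exact AlgEquiv.coe_toAlgHom_injective hστ ▸ hτ
  have hprod : σ z₁ * σ z₂ * σ z₃ = z₁ * z₂ * z₃ := by simpa only [map_mul] using hσ
  have htwo : (2 : E) ≠ 0 := (neZero_two_of_algebra K E).ne
  have not_odd : σ z₁ * σ z₂ * σ z₃ ≠ -(z₁ * z₂ * z₃) := fun hodd ↦
    mul_ne_zero htwo hne (by linear_combination hodd - hprod)
  rw [map_pow, sq_eq_sq_iff_eq_or_eq_neg] at hσ₁ hσ₂ hσ₃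
  rcases hσ₁ with s₁ | s₁ <;> rcases hσ₂ with s₂ | s₂ <;> rcases hσ₃ with s₃ | s₃
  · apply mem_of_agree 1 (one_mem H) <;> simpa
  · exact absurd (by rw [s₁, s₂, s₃]; ring) not_odd
  · exact absurd (by rw [s₁, s₂, s₃]; ring) not_odd
  · apply mem_of_agree _ h₂₃ <;> simp [*]
  · exact absurd (by rw [s₁, s₂, s₃]; ring) not_odd
  · apply mem_of_agree _ (mul_mem h₁₂ h₂₃) <;> simp [*]
  · apply mem_of_agree _ h₁₂ <;> simp [*]
  · exact absurd (by rw [s₁, s₂, s₃]; ring) not_odd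

theorem fixedField_closure_even_sign_changes [NeZero (2 : K)]
    (htop : adjoin K {z₁, z₂, z₃} = ⊤) (hne : z₁ * z₂ * z₃ ≠ 0)
    (hh₁ : h₁ z₁ = -z₁ ∧ h₁ z₂ = z₂ ∧ h₁ z₃ = z₃)
    (hh₂ : h₂ z₁ = z₁ ∧ h₂ z₂ = -z₂ ∧ h₂ z₃ = z₃)
    (hh₃ : h₃ z₁ = z₁ ∧ h₃ z₂ = z₂ ∧ h₃ z₃ = -z₃) :
    fixedField (Subgroup.closure {h₁ * h₂, h₂ * h₃}) =
      adjoin K {z₁ ^ 2, z₂ ^ 2, z₃ ^ 2, z₁ * z₂ * z₃} := by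
  set L := adjoin K {z₁ ^ 2, z₂ ^ 2, z₃ ^ 2, z₁ * z₂ * z₃} with hL
  apply le_antisymm
  · have hgen : {z₁ ^ 2, z₂ ^ 2, z₃ ^ 2, z₁ * z₂ * z₃} ⊆ (L : Set E) := subset_adjoin K _
    simp only [Set.insert_subset_iff, Set.singleton_subset_iff, SetLike.mem_coe] at hgen
    obtain ⟨hz₁, hz₂, hz₃, hp⟩ := hgen
    have : NeZero (2 : L) := neZero_two_of_algebra K L
    have : IsGalois L E := by
      refine isGalois_of_adjoin_sqrt_eq_top (adjoin_eq_top_of_adjoin_eq_top K htop) ?_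
      rintro _ (rfl | rfl | rfl)
      exacts [⟨⟨_, hz₁⟩, rfl⟩, ⟨⟨_, hz₂⟩, rfl⟩, ⟨⟨_, hz₃⟩, rfl⟩]
    have hle : L.fixingSubgroup ≤ Subgroup.closure {h₁ * h₂, h₂ * h₃} := fun σ hσ ↦ by
      have hfix := (mem_fixingSubgroup_iff L σ).1 hσ
      exact mem_closure_of_fixes_sq_of_fixes_prod htop hne hh₁ hh₂ hh₃
        (hfix _ hz₁) (hfix _ hz₂) (hfix _ hz₃) (hfix _ hp)
    calc fixedField (Subgroup.closure {h₁ * h₂, h₂ * h₃})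
      _ ≤ fixedField L.fixingSubgroup := fixedField_le hle
      _ = L := fixedField_fixingSubgroup_of_isGalois_top L
  · rw [hL, adjoin_le_iff]
    rintro _ (rfl | rfl | rfl | rfl) <;>
      simp only [SetLike.mem_coe, mem_fixedField_closure_iff] <;>
      rintro _ (rfl | rfl) <;>
      simp [hh₁, hh₂, hh₃]

end SignChanges

section CubicField

open IntermediateField Polynomial

theorem irreducible_X_sq_add_one {K : Type*} [Field K] [LinearOrder K] [IsStrictOrderedRing K] :
    Irreducible (X ^ 2 + 1 : K[X]) := by
  have hdeg : (X ^ 2 + 1 : K[X]).natDegree = 2 := by compute_degree!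
  refine irreducible_of_degree_le_three_of_not_isRoot (by simp [hdeg]) fun x hx ↦ ?_
  have hx_sq : x ^ 2 + 1 = 0 := by simpa using hx
  exact (by positivity : x ^ 2 + 1 ≠ 0) hx_sq

theorem irreducible_X_pow_three_sub_three_mul_X_add_one :
    Irreducible (X ^ 3 - 3 * X + 1 : ℚ[X]) := by
  have hmonic : (X ^ 3 - 3 * X + 1 : ℤ[X]).Monic := by monicity!
  have hdeg : (X ^ 3 - 3 * X + 1 : ℤ[X]).natDegree = 3 := by compute_degree!
  suffices hℤ : Irreducible (X ^ 3 - 3 * X + 1 : ℤ[X]) by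
    simpa using hmonic.irreducible_iff_irreducible_map_fraction_map (K := ℚ) |>.1 hℤ
  rw [hmonic.irreducible_iff_roots_eq_zero_of_degree_le_three (by simp [hdeg]) (by simp [hdeg])]
  refine Multiset.eq_zero_of_forall_notMem fun n hn ↦ ?_
  have hroot : n ^ 3 - 3 * n + 1 = 0 := by simpa using (mem_roots'.1 hn).2
  have hdvd : n ∣ 1 := ⟨3 - n ^ 2, by linear_combination hroot⟩
  rcases Int.isUnit_iff.1 (isUnit_of_dvd_one hdvd) with rfl | rfl <;> norm_num at hroot

theorem finrank_adjoin_sqrt_neg_one_cubic_root {L : Type*} [Field L] [CharZero L] {i ρ : L}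
    (hi : i ^ 2 = -1) (hρ : ρ ^ 3 - 3 * ρ + 1 = 0) : Module.finrank ℚ ℚ⟮i, ρ⟯ = 6 := by
  have hfin_i : Module.finrank ℚ ℚ⟮i⟯ = 2 := by
    rw [finrank_adjoin_simple_of_irreducible irreducible_X_sq_add_one (by simp [hi])]
    compute_degree!
  have hfin_ρ : Module.finrank ℚ ℚ⟮ρ⟯ = 3 := by
    rw [finrank_adjoin_simple_of_irreducible irreducible_X_pow_three_sub_three_mul_X_add_one
      (by simpa [map_ofNat (aeval ρ) 3] using hρ)]
    compute_degree!
  rw [finrank_adjoin_pair_of_coprime (by rw [hfin_i, hfin_ρ]; norm_num), hfin_i, hfin_ρ]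

theorem mul_one_div_one_sub_mul_one_sub_one_div {L : Type*} [Field L] {ρ : L} (h₀ : ρ ≠ 0)
    (h₁ : 1 - ρ ≠ 0) : ρ * (1 / (1 - ρ)) * (1 - 1 / ρ) = -1 := by
  field_simp
  ring

theorem adjoin_orbit_sqrt_neg_one_eq_adjoin_pair {K L : Type*} [Field K] [Field L] [Algebra K L]
    {i p ρ : L} (hi : i ^ 2 = -1) (hp : p ^ 2 = -1) :
    adjoin K {ρ, 1 / (1 - ρ), 1 - 1 / ρ, p} = K⟮i, ρ⟯ := by
  have hpi : p = i ∨ p = -i := sq_eq_sq_iff_eq_or_eq_neg.1 (hp.trans hi.symm)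
  apply le_antisymm <;> rw [adjoin_le_iff]
  · have hi_mem : i ∈ K⟮i, ρ⟯ := mem_adjoin_pair_left K i ρ
    have hρ_mem : ρ ∈ K⟮i, ρ⟯ := mem_adjoin_pair_right K i ρ
    rintro _ (rfl | rfl | rfl | rfl)
    · exact hρ_mem
    · exact div_mem (one_mem _) (sub_mem (one_mem _) hρ_mem)
    · exact sub_mem (one_mem _) (div_mem (one_mem _) hρ_mem)
    · rcases hpi with rfl | rfl
      exacts [hi_mem, neg_mem hi_mem]
  · have hp_mem : p ∈ adjoin K {ρ, 1 / (1 - ρ), 1 - 1 / ρ, p} := subset_adjoin K _ (by simp)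
    rintro _ (rfl | rfl)
    · rcases hpi with h | h
      · exact h ▸ hp_mem
      · exact neg_mem_iff.1 (h ▸ hp_mem)
    · exact subset_adjoin K _ (by simp)

theorem map_fixedField_closure_eq_adjoin {K L : Type*} [Field K] [NeZero (2 : K)] [Field L]
    [Algebra K L] {F : IntermediateField K L} {i ρ : L} (hi : i ^ 2 = -1) (hρ₀ : ρ ≠ 0)
    (hρ₁ : 1 - ρ ≠ 0) {z₁ z₂ z₃ : F} (hF : F = adjoin K {(z₁ : L), (z₂ : L), (z₃ : L)})
    (hz₁ : (z₁ : L) ^ 2 = ρ) (hz₂ : (z₂ : L) ^ 2 = 1 / (1 - ρ)) (hz₃ : (z₃ : L) ^ 2 = 1 - 1 / ρ)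
    {h₁ h₂ h₃ : Gal(F/K)} (hh₁ : h₁ z₁ = -z₁ ∧ h₁ z₂ = z₂ ∧ h₁ z₃ = z₃)
    (hh₂ : h₂ z₁ = z₁ ∧ h₂ z₂ = -z₂ ∧ h₂ z₃ = z₃)
    (hh₃ : h₃ z₁ = z₁ ∧ h₃ z₂ = z₂ ∧ h₃ z₃ = -z₃) :
    (fixedField (Subgroup.closure {h₁ * h₂, h₂ * h₃})).map F.val = K⟮i, ρ⟯ := by
  have htop : adjoin K {z₁, z₂, z₃} = ⊤ := by
    apply lift_injective F
    rw [lift_adjoin, lift_top, Set.image_insert_eq, Set.image_pair]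
    exact hF.symm
  have hp : (z₁ * z₂ * z₃ : L) ^ 2 = -1 := by
    rw [mul_pow, mul_pow, hz₁, hz₂, hz₃, mul_one_div_one_sub_mul_one_sub_one_div hρ₀ hρ₁]
  have hne : z₁ * z₂ * z₃ ≠ 0 := fun h ↦ by
    have hL : (z₁ * z₂ * z₃ : L) = 0 := congrArg Subtype.val h
    simp [hL] at hp
  rw [fixedField_closure_even_sign_changes htop hne hh₁ hh₂ hh₃, adjoin_map,
    ← adjoin_orbit_sqrt_neg_one_eq_adjoin_pair hi hp]
  simp only [Set.image_insert_eq, Set.image_singleton, coe_val, IntermediateField.coe_pow,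
    IntermediateField.coe_mul, hz₁, hz₂, hz₃]

theorem stmt14_general {L : Type*} [Field L] [CharZero L] {F : IntermediateField ℚ L} {i ρ : L}
    (hi : i ^ 2 = -1) (hρ : ρ ^ 3 - 3 * ρ + 1 = 0) {z₁ z₂ z₃ : F}
    (hF : F = adjoin ℚ {(z₁ : L), (z₂ : L), (z₃ : L)})
    (hz₁ : (z₁ : L) ^ 2 = ρ) (hz₂ : (z₂ : L) ^ 2 = 1 / (1 - ρ)) (hz₃ : (z₃ : L) ^ 2 = 1 - 1 / ρ)
    {h₁ h₂ h₃ : Gal(F/ℚ)} (hh₁ : h₁ z₁ = -z₁ ∧ h₁ z₂ = z₂ ∧ h₁ z₃ = z₃)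
    (hh₂ : h₂ z₁ = z₁ ∧ h₂ z₂ = -z₂ ∧ h₂ z₃ = z₃)
    (hh₃ : h₃ z₁ = z₁ ∧ h₃ z₂ = z₂ ∧ h₃ z₃ = -z₃) :
    (fixedField (Subgroup.closure {h₁ * h₂, h₂ * h₃})).map F.val = ℚ⟮i, ρ⟯ ∧
      Module.finrank ℚ ℚ⟮i, ρ⟯ = 6 := by
  have hρ₀ : ρ ≠ 0 := by rintro rfl; norm_num at hρ
  have hρ₁ : 1 - ρ ≠ 0 := fun h ↦ by
    have hone : (1 : L) = 0 := by linear_combination -hρ - (ρ ^ 2 + ρ - 2) * h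
    exact one_ne_zero hone
  exact ⟨map_fixedField_closure_eq_adjoin hi hρ₀ hρ₁ hF hz₁ hz₂ hz₃ hh₁ hh₂ hh₃,
    finrank_adjoin_sqrt_neg_one_cubic_root hi hρ⟩

end CubicField

/-- For `h₁, h₂, h₃ ∈ Gal(F/ℚ)` acting on the square roots
`z₁, z₂, z₃` as specified, the fixed field of the subgroup generated by `h₁h₂, h₂h₃`
is `ℚ(i, ρ)`, an extension of `ℚ` of degree `6`. -/
theorem stmt14 (ρ ρ₂ ρ₃ : ℝ) (hρroot : ρ ^ 3 - 3 * ρ + 1 = 0) (hρneg : ρ < 0)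
    (hρ₂ : ρ₂ = 1 / (1 - ρ)) (hρ₃ : ρ₃ = 1 - 1 / ρ)
    (z₁ z₂ z₃ : ℂ) (hz₁ : z₁ ^ 2 = (ρ : ℂ)) (hz₂ : z₂ ^ 2 = (ρ₂ : ℂ)) (hz₃ : z₃ ^ 2 = (ρ₃ : ℂ))
    (F : IntermediateField ℚ ℂ) (hF : F = IntermediateField.adjoin ℚ {z₁, z₂, z₃})
    (hm₁ : z₁ ∈ F) (hm₂ : z₂ ∈ F) (hm₃ : z₃ ∈ F)
    (h₁ h₂ h₃ : F ≃ₐ[ℚ] F)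
    (hh₁₁ : (h₁ ⟨z₁, hm₁⟩ : ℂ) = -z₁) (hh₁₂ : (h₁ ⟨z₂, hm₂⟩ : ℂ) = z₂)
    (hh₁₃ : (h₁ ⟨z₃, hm₃⟩ : ℂ) = z₃)
    (hh₂₁ : (h₂ ⟨z₁, hm₁⟩ : ℂ) = z₁) (hh₂₂ : (h₂ ⟨z₂, hm₂⟩ : ℂ) = -z₂)
    (hh₂₃ : (h₂ ⟨z₃, hm₃⟩ : ℂ) = z₃)
    (hh₃₁ : (h₃ ⟨z₁, hm₁⟩ : ℂ) = z₁) (hh₃₂ : (h₃ ⟨z₂, hm₂⟩ : ℂ) = z₂)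
    (hh₃₃ : (h₃ ⟨z₃, hm₃⟩ : ℂ) = -z₃) :
    (IntermediateField.fixedField (Subgroup.closure {h₁ * h₂, h₂ * h₃})).map F.val
        = IntermediateField.adjoin ℚ {Complex.I, (ρ : ℂ)} ∧
    Module.finrank ℚ (IntermediateField.adjoin ℚ {Complex.I, (ρ : ℂ)}) = 6 := by
  subst hρ₂ hρ₃
  exact stmt14_general (z₁ := ⟨z₁, hm₁⟩) (z₂ := ⟨z₂, hm₂⟩) (z₃ := ⟨z₃, hm₃⟩)
    Complex.I_sq (mod_cast hρroot) hF hz₁ (mod_cast hz₂) (mod_cast hz₃)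
    ⟨Subtype.ext hh₁₁, Subtype.ext hh₁₂, Subtype.ext hh₁₃⟩
    ⟨Subtype.ext hh₂₁, Subtype.ext hh₂₂, Subtype.ext hh₂₃⟩
    ⟨Subtype.ext hh₃₁, Subtype.ext hh₃₂, Subtype.ext hh₃₃⟩
end
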